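/- Let V be a finite set with N := |V| divisible by 4, and let b, c : ZMod 4 → ZMod 2 satisfy b(0) = 1, c(0) = 1, b(2) + c(2) = 0, and b(1) + c(1) + b(3) + c(3) = 0. Then the relation T_c on A_b is symmetric, irreflexive, and saturated: for every M maximal (with respect to inclusion) in 𝒫_{T_c}(A_b) and every B ⊆ M one has B^{T_c} = ((M ∖ B)^{T_c})^{T_c}. -/

import Mathlib

open scoped symmDiff

/-- `T_S(U) := U` if `|U ∩ S|` is even, and `T_S(U) := V ∖ (U Δ S)` if `|U ∩ S|` is odd. -/
def TSmap {V : Type*} [Fintype V] [DecidableEq V] (S U : Finset V) : Finset V :=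
  if Even (U ∩ S).card then U else (U ∆ S)ᶜ

/-- `L_b(U) := {φ : V → ZMod 2 | ∑_{z ∈ U} φ z = b(|U| mod 4)}`. -/
def Lb {V : Type*} [DecidableEq V] (b : ZMod 4 → ZMod 2) (U : Finset V) :
    Set (V → ZMod 2) :=
  {φ | ∑ z ∈ U, φ z = b (U.card : ZMod 4)}

/-- `A_b`: the disjoint union over `U ⊆ V` of the sets `L_b(U)`,
realized as the set of pairs `(U, φ)` with `φ ∈ L_b(U)`. -/
def AbGround (V : Type*) [DecidableEq V] (b : ZMod 4 → ZMod 2) : Type _ :=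
  {p : Finset V × (V → ZMod 2) // p.2 ∈ Lb b p.1}

/-- The relation `T_c` on pairs `(U, φ)`: for equal first components it is `φ ≠ φ'`,
and for `U ≠ U₁` it is `∑_{z ∈ U Δ U₁} (φ z + φ₁ z) ≠ c(|U Δ U₁| mod 4)`. -/
def TcP {V : Type*} [DecidableEq V] (c : ZMod 4 → ZMod 2)
    (p q : Finset V × (V → ZMod 2)) : Prop :=
  if p.1 = q.1 then p.2 ≠ q.2
  else ∑ z ∈ p.1 ∆ q.1, (p.2 z + q.2 z) ≠ c (((p.1 ∆ q.1).card : ZMod 4))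

/-- The relation `T_c` on `A_b`. -/
def Tc {V : Type*} [DecidableEq V] (b : ZMod 4 → ZMod 2) (c : ZMod 4 → ZMod 2)
    (l l₁ : AbGround V b) : Prop :=
  TcP c l.1 l₁.1


/-- For `B ⊆ A`, `B^T := {l ∈ A | ∀ l₁ ∈ B, (l₁, l) ∈ T}`. -/
def polar {α : Type*} (T : α → α → Prop) (B : Set α) : Set α :=
  {l | ∀ l₁ ∈ B, T l₁ l}

/-- `𝒫_T(A)`: subsets whose distinct elements are pairwise related by `T`. -/
def PTset {α : Type*} (T : α → α → Prop) : Set (Set α) :=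
  {U | ∀ l ∈ U, ∀ l₁ ∈ U, l₁ ≠ l → T l l₁}

/-- `𝒫^T(A)`: the image of `𝒫_T(A)` under `B ↦ B^T`. -/
def PTup {α : Type*} (T : α → α → Prop) : Set (Set α) :=
  polar T '' PTset T

/-- `T` is symmetric: for all `l ≠ l₁`, `(l, l₁) ∈ T ↔ (l₁, l) ∈ T`. -/
def SymmRel {α : Type*} (T : α → α → Prop) : Prop :=
  ∀ l l₁, l ≠ l₁ → (T l l₁ ↔ T l₁ l)

/-- `T` is irreflexive. -/
def IrreflRel {α : Type*} (T : α → α → Prop) : Prop :=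
  ∀ l, ¬ T l l

/-- `M` is a maximal element of `𝒫_T(A)` with respect to inclusion. -/
def MaxPT {α : Type*} (T : α → α → Prop) (M : Set α) : Prop :=
  M ∈ PTset T ∧ ∀ M' ∈ PTset T, M ⊆ M' → M' = M

/-- `T` is saturated: for every maximal `M ∈ 𝒫_T(A)` and every `B ⊆ M`,
`B^T = ((M \ B)^T)^T`. -/
def SaturatedRel {α : Type*} (T : α → α → Prop) : Prop :=
  ∀ M, MaxPT T M → ∀ B ⊆ M, polar T B = polar T (polar T (M \ B))

set_option linter.unusedSectionVars false

namespace Stmt14Aux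

variable {V : Type*} [Fintype V] [DecidableEq V]

/-- The symplectic form on pairs of vectors. -/
def BB (p q : (V → ZMod 2) × (V → ZMod 2)) : ZMod 2 := p.1 ⬝ᵥ q.2 + q.1 ⬝ᵥ p.2

/-- The hyperbolic quadratic form. -/
def QQ (p : (V → ZMod 2) × (V → ZMod 2)) : ZMod 2 := p.1 ⬝ᵥ p.2

lemma BB_add_left (p q r : (V → ZMod 2) × (V → ZMod 2)) :
    BB (p + q) r = BB p r + BB q r := by
  simp [BB, add_dotProduct, dotProduct_add]; ring

lemma BB_comm (p q : (V → ZMod 2) × (V → ZMod 2)) : BB p q = BB q p := by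
  simp [BB, add_comm]

lemma BB_add_right (p q r : (V → ZMod 2) × (V → ZMod 2)) :
    BB r (p + q) = BB r p + BB r q := by
  rw [BB_comm, BB_add_left, BB_comm p, BB_comm q]

lemma two_zero (x : ZMod 2) : x + x = 0 := by revert x; decide

lemma BB_self (p : (V → ZMod 2) × (V → ZMod 2)) : BB p p = 0 := two_zero _

lemma QQ_add (p q : (V → ZMod 2) × (V → ZMod 2)) :
    QQ (p + q) = QQ p + QQ q + BB p q := by
  simp [QQ, BB, add_dotProduct, dotProduct_add]; ring

lemma ne_zero_iff (x : ZMod 2) : x ≠ 0 ↔ x = 1 := by revert x; decide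

lemma vadd_self (p : (V → ZMod 2) × (V → ZMod 2)) : p + p = 0 := by
  ext i
  · exact two_zero _
  · exact two_zero _

lemma dot_sep (P : Submodule (ZMod 2) (V → ZMod 2)) (u : V → ZMod 2)
    (h : ∀ φ : V → ZMod 2, (∀ p ∈ P, p ⬝ᵥ φ = 0) → u ⬝ᵥ φ = 0) : u ∈ P := by
  by_contra hu
  obtain ⟨f, hf, hP⟩ := Submodule.exists_le_ker_of_notMem hu
  have key : ∀ x : V → ZMod 2, f x = x ⬝ᵥ (fun i => f (Pi.single i 1)) := by
    intro x
    have := LinearMap.pi_apply_eq_sum_univ f x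
    rw [this]
    simp only [dotProduct, smul_eq_mul]
    refine Finset.sum_congr rfl fun i _ => ?_
    congr 2
    ext j
    simp [Pi.single_apply, eq_comm]
  apply hf
  rw [key]
  apply h
  intro p hp
  rw [← key]
  exact hP hp

lemma three_mem (M : Set ((V → ZMod 2) × (V → ZMod 2)))
    (hQ : ∀ e ∈ M, QQ e = 1) (hB : ∀ e ∈ M, ∀ e' ∈ M, BB e e' = 0)
    (hM : ∀ x, QQ x = 1 → (∀ e ∈ M, BB x e = 0) → x ∈ M)
    {x y z} (hx : x ∈ M) (hy : y ∈ M) (hz : z ∈ M) : x + y + z ∈ M := by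
  apply hM
  · rw [QQ_add, QQ_add, BB_add_left, hQ x hx, hQ y hy, hQ z hz, hB x hx y hy, hB x hx z hz,
      hB y hy z hz]; decide
  · intro e he
    rw [BB_add_left, BB_add_left, hB x hx e he, hB y hy e he, hB z hz e he]; decide

lemma no_v (M : Set ((V → ZMod 2) × (V → ZMod 2)))
    (hQ : ∀ e ∈ M, QQ e = 1) (hB : ∀ e ∈ M, ∀ e' ∈ M, BB e e' = 0)
    (hM : ∀ x, QQ x = 1 → (∀ e ∈ M, BB x e = 0) → x ∈ M)
    (e0 : (V → ZMod 2) × (V → ZMod 2)) (h0 : e0 ∈ M)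
    (v : (V → ZMod 2) × (V → ZMod 2)) (hv : QQ v = 1) (hvM : ∀ e ∈ M, BB v e = 1) : False := by
  let W0 : Submodule (ZMod 2) ((V → ZMod 2) × (V → ZMod 2)) :=
    { carrier := {w | e0 + w ∈ M}
      zero_mem' := by simpa using h0
      add_mem' := by
        intro a b ha hb
        have := three_mem M hQ hB hM h0 ha hb
        have e : e0 + (e0 + a) + (e0 + b) = (e0 + e0) + (e0 + (a + b)) := by abel
        rw [e, vadd_self, zero_add] at this
        exact this
      smul_mem' := by
        intro t x hx
        have : t = 0 ∨ t = 1 := by revert t; decide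
        rcases this with rfl | rfl
        · simpa using h0
        · simpa using hx }
  have memW : ∀ w, w ∈ W0 ↔ e0 + w ∈ M := fun w => Iff.rfl
  have Bw : ∀ w ∈ W0, ∀ x, BB w x = BB e0 x + BB (e0 + w) x := by
    intro w hw x
    rw [BB_add_left, ← add_assoc, two_zero, zero_add]
  have hvW : ∀ w ∈ W0, BB w v = 0 := by
    intro w hw
    rw [Bw w hw, BB_comm, hvM _ h0, BB_comm, hvM _ hw]; decide
  have hQW : ∀ w ∈ W0, QQ w = 0 := by
    intro w hw
    have h1 := hQ _ hw
    have h2 := hB _ h0 _ hw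
    rw [BB_add_right, BB_self, zero_add] at h2
    rw [QQ_add, hQ _ h0, h2] at h1
    simpa using h1
  -- a singular vector orthogonal to W0 outside W0
  have hx : ∃ x, QQ x = 0 ∧ (∀ w ∈ W0, BB w x = 0) ∧ x ∉ W0 := by
    by_contra hcon
    push Not at hcon
    have hu : v.1 ∈ W0.map (LinearMap.fst (ZMod 2) (V → ZMod 2) (V → ZMod 2)) := by
      apply dot_sep
      intro φ hφ
      have hmem : ((0, φ) : (V → ZMod 2) × (V → ZMod 2)) ∈ W0 := by
        apply hcon
        · simp [QQ]
        · intro w hw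
          have := hφ w.1 ⟨w, hw, rfl⟩
          simp [BB, this]
      have := hvW _ hmem
      simpa [BB] using this
    obtain ⟨w, hw, hwv⟩ := hu
    have hwv' : w.1 = v.1 := hwv
    have h1 := hQW w hw
    have h2 := hvW w hw
    simp only [QQ, BB] at h1 h2 hv
    rw [hwv'] at h1 h2
    rw [h1, hv] at h2
    exact absurd h2 (by decide)
  obtain ⟨x, hx0, hxW, hxn⟩ := hx
  have hconst : ∀ e ∈ M, BB e x = BB e0 x := by
    intro e he
    have hw : e0 + e ∈ W0 := by
      rw [memW, ← add_assoc, vadd_self, zero_add]; exact he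
    have := hxW _ hw
    rw [BB_add_left] at this
    generalize BB e x = a at *
    generalize BB e0 x = b at *
    revert a b; decide
  have hcase : ∀ t : ZMod 2, t = 0 ∨ t = 1 := by decide
  rcases hcase (BB e0 x) with h | h
  · apply hxn
    rw [memW]
    apply hM
    · rw [QQ_add, hQ _ h0, hx0, h]; decide
    · intro e he
      rw [BB_add_left, hB _ h0 _ he, BB_comm, hconst e he, h]; decide
  · have horth : ∀ e ∈ M, BB (v + x) e = 0 := by
      intro e he
      rw [BB_add_left, hvM e he, BB_comm x, hconst e he, h]; decide
    rcases hcase (BB v x) with h' | h'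
    · have hq : QQ (v + x) = 1 := by rw [QQ_add, hv, hx0, h']; decide
      have := hvM _ (hM _ hq horth)
      rw [BB_add_right, BB_self, h'] at this
      exact absurd this (by decide)
    · have hq : QQ (v + x + e0) = 1 := by
        rw [QQ_add, horth _ h0, QQ_add, hv, hx0, h', hQ _ h0]; decide
      have := hvM _ (hM _ hq (fun e he => by
        rw [BB_add_left, horth e he, hB _ h0 _ he]; decide))
      rw [BB_add_right, BB_add_right, BB_self, h', hvM _ h0] at this
      exact absurd this (by decide)

lemma key (M : Set ((V → ZMod 2) × (V → ZMod 2)))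
    (hQ : ∀ e ∈ M, QQ e = 1) (hB : ∀ e ∈ M, ∀ e' ∈ M, BB e e' = 0)
    (hM : ∀ x, QQ x = 1 → (∀ e ∈ M, BB x e = 0) → x ∈ M)
    (l m : (V → ZMod 2) × (V → ZMod 2)) (hl : QQ l = 1) (hm : QQ m = 1)
    (hlm : BB l m = 1) (hlM : l ∉ M) (hmM : m ∉ M) :
    ∃ e ∈ M, BB e l = 1 ∧ BB e m = 1 := by
  by_contra hcon
  push Not at hcon
  have hcase : ∀ t : ZMod 2, t = 0 ∨ t = 1 := by decide
  have ex : ∀ y, QQ y = 1 → y ∉ M → ∃ e ∈ M, BB e y = 1 := by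
    intro y hy hyM
    by_contra hc
    push Not at hc
    apply hyM
    apply hM _ hy
    intro e he
    rw [BB_comm]
    exact (hcase _).resolve_right (hc e he)
  obtain ⟨e1, h1, h1l⟩ := ex l hl hlM
  obtain ⟨e2, h2, h2m⟩ := ex m hm hmM
  have h1m := (hcase _).resolve_right (hcon e1 h1 h1l)
  have h2l : BB e2 l = 0 := (hcase _).resolve_right (fun h => hcon e2 h2 h h2m)
  apply no_v M hQ hB hM e1 h1 (l + m)
  · rw [QQ_add, hl, hm, hlm]; decide
  · intro e he
    rw [BB_comm, BB_add_right]
    rcases hcase (BB e l) with hel | hel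
    · rcases hcase (BB e m) with hem | hem
      · exfalso
        apply hcon _ (three_mem M hQ hB hM h1 h2 he)
        · rw [BB_add_left, BB_add_left, h1l, h2l, hel]; decide
        · rw [BB_add_left, BB_add_left, h1m, h2m, hem]; decide
      · rw [hel, hem]; decide
    · rw [hel, (hcase _).resolve_right (hcon e he hel)]; decide

/-- Saturation transferred along a bijection onto the nonsingular vectors. -/
lemma saturated_of_model {α : Type*} (T : α → α → Prop)
    (Ψ : α → (V → ZMod 2) × (V → ZMod 2)) (hinj : Function.Injective Ψ)
    (hQ : ∀ a, QQ (Ψ a) = 1) (hsurj : ∀ x, QQ x = 1 → ∃ a, Ψ a = x)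
    (hT : ∀ a a', T a a' ↔ a ≠ a' ∧ BB (Ψ a) (Ψ a') = 0) : SaturatedRel T := by
  intro M hMax B hBM
  have hcase : ∀ t : ZMod 2, t = 0 ∨ t = 1 := by decide
  obtain ⟨hP, hmax⟩ := hMax
  have hB' : ∀ e ∈ Ψ '' M, ∀ e' ∈ Ψ '' M, BB e e' = 0 := by
    rintro _ ⟨a, ha, rfl⟩ _ ⟨a', ha', rfl⟩
    by_cases h : a' = a
    · rw [h, BB_self]
    · exact ((hT _ _).1 (hP a ha a' ha' h)).2
  have hQ' : ∀ e ∈ Ψ '' M, QQ e = 1 := by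
    rintro _ ⟨a, ha, rfl⟩
    exact hQ a
  have hM' : ∀ x, QQ x = 1 → (∀ e ∈ Ψ '' M, BB x e = 0) → x ∈ Ψ '' M := by
    intro x hx h
    obtain ⟨a, rfl⟩ := hsurj x hx
    refine ⟨a, ?_, rfl⟩
    have : insert a M = M := by
      apply hmax _ _ (Set.subset_insert _ _)
      rintro p (rfl | hp) q (rfl | hq) hne
      · exact absurd rfl hne
      · exact (hT _ _).2 ⟨hne.symm, h _ ⟨q, hq, rfl⟩⟩
      · exact (hT _ _).2 ⟨hne.symm, by rw [BB_comm]; exact h _ ⟨p, hp, rfl⟩⟩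
      · exact hP p hp q hq hne
    rw [← this]
    exact Set.mem_insert _ _
  have symm : ∀ a a', T a a' → T a' a := by
    intro a a' h
    rw [hT] at h ⊢
    exact ⟨h.1.symm, by rw [BB_comm]; exact h.2⟩
  have irr : ∀ a, ¬ T a a := fun a h => ((hT _ _).1 h).1 rfl
  -- every pair of non-orthogonal elements has a common non-orthogonal element of M
  have main : ∀ l m, ¬ T l m → ∃ e ∈ M, ¬ T e l ∧ ¬ T e m := by
    intro l m hlm
    by_cases hl : l ∈ M
    · exact ⟨l, hl, irr l, hlm⟩
    by_cases hm : m ∈ M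
    · exact ⟨m, hm, fun h => hlm (symm _ _ h), irr m⟩
    have hl' : Ψ l ∉ Ψ '' M := fun ⟨a, ha, h⟩ => hl (hinj h ▸ ha)
    have hm' : Ψ m ∉ Ψ '' M := fun ⟨a, ha, h⟩ => hm (hinj h ▸ ha)
    by_cases heq : l = m
    · subst heq
      by_contra hcon
      push Not at hcon
      apply hl'
      apply hM' _ (hQ l)
      rintro _ ⟨a, ha, rfl⟩
      by_contra hne
      have hn : ¬ T a l := fun h => hne (by rw [BB_comm]; exact ((hT _ _).1 h).2)
      exact hn (hcon a ha hn)
    · have h1 : BB (Ψ l) (Ψ m) = 1 :=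
        (hcase _).resolve_left (fun h => hlm ((hT _ _).2 ⟨heq, h⟩))
      obtain ⟨_, ⟨e, he, rfl⟩, hel, hem⟩ :=
        key (Ψ '' M) hQ' hB' hM' (Ψ l) (Ψ m) (hQ l) (hQ m) h1 hl' hm'
      refine ⟨e, he, fun h => ?_, fun h => ?_⟩
      · rw [((hT _ _).1 h).2] at hel; exact absurd hel (by decide)
      · rw [((hT _ _).1 h).2] at hem; exact absurd hem (by decide)
  ext l
  constructor
  · intro hl m hm
    by_contra hn
    obtain ⟨e, he, h1, h2⟩ := main m l hn
    by_cases heB : e ∈ B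
    · exact h2 (hl e heB)
    · exact h1 (hm e ⟨he, heB⟩)
  · intro hl e he
    apply hl
    intro e' he'
    apply hP e' he'.1 e (hBM he)
    rintro rfl
    exact he'.2 he

/-! ### The model map -/

/-- parity -/
def pE (n : ZMod 4) : ZMod 2 := (n.val : ZMod 2)

/-- binomial coefficient `n choose 2` modulo 2 -/
def pq (n : ZMod 4) : ZMod 2 := ((n.val.choose 2 : ℕ) : ZMod 2)

lemma pE_sd : ∀ a b k : ZMod 4, pE (a + b - 2 * k) = pE a + pE b := by decide

lemma pq_sd : ∀ a b k : ZMod 4, pq (a + b - 2 * k) = pq a + pq b + pE a * pE b + pE k := by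
  decide

lemma pE_succ : ∀ n : ZMod 4, pE (n + 1) = pE n + 1 := by decide
lemma pq_succ : ∀ n : ZMod 4, pq (n + 1) = pq n + pE n := by decide

lemma pE_nat (n : ℕ) : pE (n : ZMod 4) = (n : ZMod 2) := by
  induction n with
  | zero => decide
  | succ n ih => push_cast; rw [pE_succ, ih]

lemma fun_expand (b : ZMod 4 → ZMod 2) (hb0 : b 0 = 1) (n : ZMod 4) :
    b n = 1 + (1 + b 1) * pE n + (1 + b 2) * pq n + (1 + b 1 + b 2 + b 3) * (pE n * pq n) := by
  have hn : n = 0 ∨ n = 1 ∨ n = 2 ∨ n = 3 := by revert n; decide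
  have e0 : pE 0 = 0 := by decide
  have e1 : pE 1 = 1 := by decide
  have e2 : pE 2 = 0 := by decide
  have e3 : pE 3 = 1 := by decide
  have q0 : pq 0 = 0 := by decide
  have q1 : pq 1 = 0 := by decide
  have q2 : pq 2 = 1 := by decide
  have q3 : pq 3 = 1 := by decide
  rcases hn with rfl | rfl | rfl | rfl
  · rw [hb0, e0, q0]; ring
  · rw [e1, q1]; generalize b 1 = x; generalize b 2 = y; generalize b 3 = z
    revert x y z; decide
  · rw [e2, q2]; generalize b 1 = x; generalize b 2 = y; generalize b 3 = z
    revert x y z; decide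
  · rw [e3, q3]; generalize b 1 = x; generalize b 2 = y; generalize b 3 = z
    revert x y z; decide

/-- indicator vector -/
def ind (U : Finset V) : V → ZMod 2 := fun j => if j ∈ U then 1 else 0

lemma ind_dot (U : Finset V) (g : V → ZMod 2) : ind U ⬝ᵥ g = ∑ z ∈ U, g z := by
  simp [ind, dotProduct, Finset.sum_ite_mem]

lemma ind_sd (U U' : Finset V) : ind (U ∆ U') = ind U + ind U' := by
  ext j
  by_cases h : j ∈ U <;> by_cases h' : j ∈ U' <;> simp [ind, Finset.mem_symmDiff, h, h'] <;> decide

lemma card_sd (U U' : Finset V) : ((U ∆ U').card : ZMod 4) =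
    (U.card : ZMod 4) + U'.card - 2 * ((U ∩ U').card : ZMod 4) := by
  have h1 : (U ∆ U').card = (U \ U').card + (U' \ U).card := by
    rw [symmDiff_def, Finset.sup_eq_union, Finset.card_union_of_disjoint disjoint_sdiff_sdiff]
  have h2 := Finset.card_sdiff_add_card_inter U U'
  have h3 := Finset.card_sdiff_add_card_inter U' U
  rw [Finset.inter_comm U' U] at h3
  rw [h1, ← h2, ← h3]
  push_cast
  ring

lemma exists_r : ∃ r : V → V → ZMod 2, (∀ i, r i i = 0) ∧ ∀ i j, i ≠ j → r i j + r j i = 1 := by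
  let e := Fintype.equivFin V
  refine ⟨fun i j => if e i < e j then 1 else 0, fun i => by simp, fun i j hij => ?_⟩
  have : e i ≠ e j := fun h => hij (e.injective h)
  rcases lt_or_gt_of_ne this with h | h
  · simp [h, not_lt.2 h.le]
  · simp [h, not_lt.2 h.le]

lemma r_self (r : V → V → ZMod 2) (h0 : ∀ i, r i i = 0)
    (h1 : ∀ i j, i ≠ j → r i j + r j i = 1) (U : Finset V) :
    ∑ j ∈ U, ∑ i ∈ U, r i j = pq (U.card : ZMod 4) := by
  induction U using Finset.induction_on with
  | empty => simp; decide
  | insert a U ha ih =>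
    rw [Finset.card_insert_of_notMem ha]
    push_cast
    rw [pq_succ, ← ih, pE_nat, Finset.sum_insert ha]
    simp only [Finset.sum_insert ha, h0]
    rw [Finset.sum_add_distrib]
    have : ∑ i ∈ U, r i a + ∑ j ∈ U, r a j = (U.card : ZMod 2) := by
      rw [← Finset.sum_add_distrib, Finset.sum_congr rfl (g := fun _ => (1 : ZMod 2))]
      · simp
      · intro i hi
        exact h1 _ _ (fun h => ha (h ▸ hi))
    rw [← this]; ring

lemma r_cross (r : V → V → ZMod 2) (h0 : ∀ i, r i i = 0)
    (h1 : ∀ i j, i ≠ j → r i j + r j i = 1) (U U' : Finset V) :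
    ∑ j ∈ U, ∑ i ∈ U', r i j + ∑ j ∈ U', ∑ i ∈ U, r i j =
      (U.card : ZMod 2) * U'.card + ((U ∩ U').card : ZMod 2) := by
  rw [Finset.sum_comm (s := U')]
  rw [← Finset.sum_add_distrib]
  simp only [← Finset.sum_add_distrib]
  have : ∀ j ∈ U, ∀ i ∈ U', r i j + r j i = 1 + if j = i then 1 else 0 := by
    intro j _ i _
    by_cases h : j = i
    · subst h; rw [h0]; simp; decide
    · rw [if_neg h, h1 _ _ (Ne.symm h)]; simp
  rw [Finset.sum_congr rfl (fun j hj => Finset.sum_congr rfl (this j hj))]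
  simp only [Finset.sum_add_distrib, Finset.sum_ite_eq, Finset.sum_const, Finset.sum_ite_mem]
  simp

/-- the shift -/
def sh (r : V → V → ZMod 2) (α β γ δ : ZMod 2) (U : Finset V) : V → ZMod 2 := fun j =>
  (δ + γ * (pq U.card + pE U.card)) + (α + δ + γ * pE U.card) * ind U j + β * ∑ i ∈ U, r i j

lemma sh_sum (r : V → V → ZMod 2) (α β γ δ : ZMod 2) (U U' : Finset V) :
    ∑ j ∈ U', sh r α β γ δ U j = (δ + γ * (pq U.card + pE U.card)) * pE U'.card +
      (α + δ + γ * pE U.card) * pE ((U' ∩ U).card : ZMod 4) + β * ∑ j ∈ U', ∑ i ∈ U, r i j := by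
  simp only [sh, Finset.sum_add_distrib, ← Finset.mul_sum, pE_nat]
  simp [ind, Finset.sum_ite_mem]
  ring

lemma arith1 : ∀ α β γ δ E q : ZMod 2, (δ + γ * (q + E)) * E + (α + δ + γ * E) * E + β * q
    = α * E + β * q + γ * (E * q) := by decide

end Stmt14Aux

open Stmt14Aux

theorem stmt14 {V : Type*} [Fintype V] [DecidableEq V]
    (h4 : 4 ∣ Fintype.card V) (b c : ZMod 4 → ZMod 2)
    (hb0 : b 0 = 1) (hc0 : c 0 = 1) (hbc2 : b 2 + c 2 = 0)
    (hbc13 : b 1 + c 1 + b 3 + c 3 = 0) :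
    SymmRel (Tc (V := V) b c) ∧ IrreflRel (Tc (V := V) b c) ∧
      SaturatedRel (Tc (V := V) b c) := by
  obtain ⟨r, h0, h1⟩ := exists_r (V := V)
  obtain ⟨α, hα⟩ : ∃ α, α = 1 + b 1 := ⟨_, rfl⟩
  obtain ⟨β, hβ⟩ : ∃ β, β = 1 + b 2 := ⟨_, rfl⟩
  obtain ⟨γ, hγ⟩ : ∃ γ, γ = 1 + b 1 + b 2 + b 3 := ⟨_, rfl⟩
  obtain ⟨δ, hδ⟩ : ∃ δ, δ = b 1 + c 1 := ⟨_, rfl⟩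
  have hb : ∀ n, b n = 1 + α * pE n + β * pq n + γ * (pE n * pq n) := by
    intro n; rw [hα, hβ, hγ]; exact fun_expand b hb0 n
  have hc : ∀ n, c n = 1 + (α + δ) * pE n + β * pq n + γ * (pE n * pq n) := by
    intro n
    rw [fun_expand c hc0 n]
    have e1 : 1 + c 1 = α + δ := by
      rw [hα, hδ]; generalize b 1 = x; generalize c 1 = y; revert x y; decide
    have e2 : 1 + c 2 = β := by
      rw [hβ]; revert hbc2; generalize b 2 = x; generalize c 2 = y; revert x y; decide
    have e3 : 1 + c 1 + c 2 + c 3 = γ := by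
      rw [hγ]; revert hbc2 hbc13
      generalize b 2 = x; generalize c 2 = y; generalize b 1 = z; generalize c 1 = w
      generalize b 3 = s; generalize c 3 = t
      revert x y z w s t; decide
    rw [e3, e1, e2]
  have hself : ∀ U : Finset V, ∑ z ∈ U, sh r α β γ δ U z = 1 + b U.card := by
    intro U
    rw [sh_sum, Finset.inter_self, r_self r h0 h1, hb, arith1]
    generalize pE (U.card : ZMod 4) = E
    generalize pq (U.card : ZMod 4) = q
    clear * -
    revert α β γ E q; decide
  have hcross : ∀ U U' : Finset V, ∑ z ∈ U, sh r α β γ δ U' z + ∑ z ∈ U', sh r α β γ δ U z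
      = 1 + b U.card + b U'.card + c ((U ∆ U').card : ZMod 4) := by
    intro U U'
    have hr := r_cross r h0 h1 U U'
    simp only [← pE_nat] at hr
    rw [sh_sum, sh_sum, card_sd, hb, hb, hc, pE_sd, pq_sd, Finset.inter_comm U' U]
    generalize ∑ j ∈ U, ∑ i ∈ U', r i j = X at *
    generalize ∑ j ∈ U', ∑ i ∈ U, r i j = Y at *
    generalize pE (U.card : ZMod 4) = E at *
    generalize pq (U.card : ZMod 4) = q
    generalize pE (U'.card : ZMod 4) = E' at *
    generalize pq (U'.card : ZMod 4) = q'
    generalize pE ((U ∩ U').card : ZMod 4) = k at *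
    have hX : X = Y + E * E' + k := by
      linear_combination hr - two_zero Y
    subst hX
    clear * -
    have hcase : ∀ t : ZMod 2, t = 0 ∨ t = 1 := by decide
    rcases hcase α with rfl | rfl <;> rcases hcase β with rfl | rfl <;>
      rcases hcase γ with rfl | rfl <;> rcases hcase δ with rfl | rfl <;>
      · revert E E' q q' k Y; decide
  let Ψ : AbGround V b → (V → ZMod 2) × (V → ZMod 2) := fun p =>
    (ind p.1.1, p.1.2 + sh r α β γ δ p.1.1)
  have hind : Function.Injective (ind (V := V)) := by
    intro U U' h
    ext j
    have hj := congrFun h j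
    clear h
    simp only [ind] at hj
    by_cases h1 : j ∈ U <;> by_cases h2 : j ∈ U' <;> simp [h1, h2] at hj ⊢
  have hinj : Function.Injective Ψ := by
    rintro ⟨⟨U, φ⟩, h⟩ ⟨⟨U', φ'⟩, h'⟩ heq
    have e1 : U = U' := hind (congrArg Prod.fst heq)
    subst e1
    have e2 : φ + sh r α β γ δ U = φ' + sh r α β γ δ U := congrArg Prod.snd heq
    have e3 := add_right_cancel e2
    subst e3
    rfl
  have hQ : ∀ a, QQ (Ψ a) = 1 := by
    rintro ⟨⟨U, φ⟩, h⟩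
    have h' : ∑ z ∈ U, φ z = b (U.card : ZMod 4) := h
    change ind U ⬝ᵥ (φ + sh r α β γ δ U) = 1
    rw [dotProduct_add, ind_dot, ind_dot, h', hself]
    linear_combination two_zero (b U.card)
  have hsurj : ∀ x, QQ x = 1 → ∃ a, Ψ a = x := by
    rintro ⟨u, φ⟩ hx
    have hu : ind (Finset.univ.filter fun j => u j = 1) = u := by
      ext j
      simp only [ind, Finset.mem_filter, Finset.mem_univ, true_and]
      generalize u j = t
      revert t; decide
    generalize (Finset.univ.filter fun j => u j = 1) = U at hu
    subst hu
    have hx' : ∑ z ∈ U, φ z = 1 := by rw [← ind_dot]; exact hx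
    refine ⟨⟨(U, φ + sh r α β γ δ U), ?_⟩, ?_⟩
    · change ∑ z ∈ U, (φ z + sh r α β γ δ U z) = b U.card
      rw [Finset.sum_add_distrib, hx', hself]
      linear_combination two_zero (1 : ZMod 2)
    · refine Prod.ext rfl ?_
      ext j
      change φ j + sh r α β γ δ U j + sh r α β γ δ U j = φ j
      rw [add_assoc, two_zero, add_zero]
  have hT : ∀ a a', Tc b c a a' ↔ a ≠ a' ∧ BB (Ψ a) (Ψ a') = 0 := by
    rintro ⟨⟨U, φ⟩, h⟩ ⟨⟨U', φ'⟩, h'⟩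
    have hU : ∑ z ∈ U, φ z = b (U.card : ZMod 4) := h
    have hU' : ∑ z ∈ U', φ' z = b (U'.card : ZMod 4) := h'
    have hBB : BB (Ψ ⟨(U, φ), h⟩) (Ψ ⟨(U', φ'), h'⟩) =
        ∑ z ∈ U, φ' z + ∑ z ∈ U', φ z + (1 + b U.card + b U'.card + c ((U ∆ U').card : ZMod 4)) := by
      change ind U ⬝ᵥ (φ' + sh r α β γ δ U') + ind U' ⬝ᵥ (φ + sh r α β γ δ U) = _
      rw [dotProduct_add, dotProduct_add, ind_dot, ind_dot, ind_dot, ind_dot, ← hcross]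
      ring
    rw [hBB]
    change TcP c (U, φ) (U', φ') ↔ _
    by_cases hUU : U = U'
    · subst hUU
      have : ∑ z ∈ U, φ' z + ∑ z ∈ U, φ z + (1 + b U.card + b U.card + c ((U ∆ U).card : ZMod 4))
          = 0 := by
        rw [hU, hU', symmDiff_self]
        simp only [Finset.bot_eq_empty, Finset.card_empty, Nat.cast_zero, hc0]
        generalize b _ = t
        revert t; decide
      simp only [this, and_true, TcP, if_true]
      constructor
      · intro hne heq
        exact hne (congrArg (fun p : AbGround V b => p.1.2) heq)
      · rintro hne rfl
        exact hne rfl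
    · have hne : (⟨(U, φ), h⟩ : AbGround V b) ≠ ⟨(U', φ'), h'⟩ := fun heq =>
        hUU (congrArg (fun p : AbGround V b => p.1.1) heq)
      have hs : ∑ z ∈ U ∆ U', (φ z + φ' z) =
          b U.card + b U'.card + ∑ z ∈ U, φ' z + ∑ z ∈ U', φ z := by
        rw [← ind_dot, ind_sd, add_dotProduct, ind_dot, ind_dot, Finset.sum_add_distrib,
          Finset.sum_add_distrib, hU, hU']
        ring
      refine Iff.trans ?_ (and_iff_right hne).symm
      simp only [TcP, if_neg hUU, hs, ne_eq]
      generalize b (U.card : ZMod 4) = x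
      generalize b (U'.card : ZMod 4) = y
      generalize c _ = z
      generalize ∑ z ∈ U, φ' z = s
      generalize ∑ z ∈ U', φ z = t
      clear * -
      revert x y z s t; decide
  refine ⟨?_, ?_, saturated_of_model _ Ψ hinj hQ hsurj hT⟩
  · intro l l' hne
    rw [hT, hT, BB_comm, ne_comm]
  · intro l h
    exact ((hT _ _).1 h).1 rfl
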